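/- For every nonzero linear code C ⊆ F_{q^m}^n, the minimum rank distance equals the first RGRW with respect to the zero subcode: d_R(C) = M_{R,1}(C,{0}). -/

import Mathlib

/-!
A vector `x` over `L ⊇ K` lies in the `L`-span of `r` vectors with entries in `K` exactly when its
coordinates lie in the `K`-span of `r` elements of `L`: both say that `x i = ∑ j, c j * a j i` with
`c j ∈ L` and `a j i ∈ K`. Galois descent identifies the subspaces fixed by the Frobenius `v ↦ v^q`
with those spanned by vectors over `F_q`. So the rank weight of `x` is the least dimension of a
Galois closed space containing `x`, and minimizing over the nonzero `x ∈ C` gives the theorem,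
because `V` has relative dimension at least one exactly when it contains a nonzero codeword.
-/

open scoped BigOperators

noncomputable section

variable (q : ℕ) (Fq : Type*) {Fqm : Type*} [Field Fq] [Field Fqm] [Algebra Fq Fqm]

/-- `V = V^q`: the image of `V` under the coordinatewise `q`-th power map equals `V`
(membership in the family `Γ(F_{q^m}^n)`). -/
def IsGalClosed {n : ℕ} (V : Submodule Fqm (Fin n → Fqm)) : Prop :=
  (fun v : Fin n → Fqm => fun i => v i ^ q) '' (V : Set (Fin n → Fqm)) =
    (V : Set (Fin n → Fqm))

/-- The `i`-th relative dimension/intersection profile (RDIP) of `C1` and `C2`. -/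
noncomputable def RDIP {n : ℕ} (C1 C2 : Submodule Fqm (Fin n → Fqm)) (i : ℕ) : ℕ :=
  sSup {d : ℕ | ∃ V : Submodule Fqm (Fin n → Fqm), IsGalClosed q V ∧
    Module.finrank Fqm ↥V = i ∧
    d = Module.finrank Fqm ↥(C1 ⊓ V) - Module.finrank Fqm ↥(C2 ⊓ V)}

/-- The `i`-th relative generalized rank weight (RGRW) of `C1` and `C2`. -/
noncomputable def RGRW {n : ℕ} (C1 C2 : Submodule Fqm (Fin n → Fqm)) (i : ℕ) : ℕ :=
  sInf {d : ℕ | ∃ V : Submodule Fqm (Fin n → Fqm), IsGalClosed q V ∧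
    d = Module.finrank Fqm ↥V ∧
    i ≤ Module.finrank Fqm ↥(C1 ⊓ V) - Module.finrank Fqm ↥(C2 ⊓ V)}

/-- The rank weight `d_R(x,0)` of a vector: the `F_q`-dimension of the `F_q`-span of
its coordinates. -/
noncomputable def rankWeight {ι : Type*} (x : ι → Fqm) : ℕ :=
  Module.finrank Fq ↥(Submodule.span Fq (Set.range x))

/-- The minimum rank distance of a (nonzero) linear code. -/
noncomputable def minRankDist {ι : Type*} (C : Submodule Fqm (ι → Fqm)) : ℕ :=
  sInf {d : ℕ | ∃ x, x ∈ C ∧ x ≠ 0 ∧ d = rankWeight Fq x}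

/-- The dual code with respect to the standard bilinear form `⟨x,y⟩ = ∑ i, x i * y i`. -/
def dualCode {n : ℕ} (V : Submodule Fqm (Fin n → Fqm)) : Submodule Fqm (Fin n → Fqm) where
  carrier := {x | ∀ v ∈ V, ∑ i, x i * v i = 0}
  add_mem' := by
    intro a b ha hb v hv
    have h1 := ha v hv
    have h2 := hb v hv
    simp only [Set.mem_setOf_eq] at *
    simp only [Pi.add_apply, add_mul]
    rw [Finset.sum_add_distrib, h1, h2, add_zero]
  zero_mem' := by
    intro v hv
    simp
  smul_mem' := by
    intro c x hx v hv
    have h := hx v hv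
    simp only [Set.mem_setOf_eq] at *
    simp only [Pi.smul_apply, smul_eq_mul, mul_assoc]
    rw [← Finset.mul_sum, h, mul_zero]

section RationalVectors

variable (K L ι : Type*) [Field K] [Field L] [Algebra K L]

/-- The `K`-rational points of the coordinate space `L^ι`. The subspaces of `L^ι` defined over `K`
are the `L`-spans of sets of such vectors. -/
def rationalVectors : Set (ι → L) :=
  {v | ∀ i, v i ∈ Set.range (algebraMap K L)}

variable {K L ι}

lemma algHom_comp_eq_self_of_mem_rationalVectors (σ : L →ₐ[K] L) {v : ι → L}
    (hv : v ∈ rationalVectors K L ι) : σ ∘ v = v := by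
  funext i
  obtain ⟨a, ha⟩ := hv i
  rw [Function.comp_apply, ← ha, σ.commutes]

lemma algHom_comp_mem_span_of_subset_rationalVectors (σ : L →ₐ[K] L) {s : Set (ι → L)}
    (hs : s ⊆ rationalVectors K L ι) {v : ι → L} (hv : v ∈ Submodule.span L s) :
    σ ∘ v ∈ Submodule.span L s := by
  induction hv using Submodule.span_induction with
  | mem v hv =>
    rw [algHom_comp_eq_self_of_mem_rationalVectors σ (hs hv)]
    exact Submodule.subset_span hv
  | zero =>
    rw [show σ ∘ (0 : ι → L) = 0 from funext fun _ => map_zero σ]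
    exact Submodule.zero_mem _
  | add v w _ _ hv hw =>
    rw [show σ ∘ (v + w) = σ ∘ v + σ ∘ w from funext fun _ => map_add σ _ _]
    exact Submodule.add_mem _ hv hw
  | smul c v _ hv =>
    rw [show σ ∘ (c • v) = σ c • (σ ∘ v) from funext fun _ => map_mul σ _ _]
    exact Submodule.smul_mem _ _ hv

lemma support_sub_smul_ssubset {u d : ι → L} {k : ι} (hd : d k ≠ 0)
    (hdu : Function.support d ⊆ Function.support u) :
    Function.support (u - (u k / d k) • d) ⊂ Function.support u := by
  have hsub : Function.support (u - (u k / d k) • d) ⊆ Function.support u :=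
    (Function.support_sub _ _).trans
      (Set.union_subset subset_rfl ((Function.support_const_smul_subset _ _).trans hdu))
  exact (Set.ssubset_iff_of_subset hsub).2 ⟨k, hdu hd, by simp [hd]⟩

lemma support_algHom_comp_sub_ssubset (σ : L →ₐ[K] L) {u : ι → L} {j : ι} (hj : u j = 1) :
    Function.support (σ ∘ u - u) ⊂ Function.support u := by
  have hsub : Function.support (σ ∘ u - u) ⊆ Function.support u :=
    (Function.support_sub _ _).trans
      (Set.union_subset (Function.support_comp_subset (map_zero σ) u) subset_rfl)
  exact (Set.ssubset_iff_of_subset hsub).2 ⟨j, by simp [hj], by simp [hj]⟩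

/-- Galois descent: induct on the support of `v`. If `v` is scaled to have a coordinate `1` and is
not rational, then `σ v - v ≠ 0` has smaller support, and subtracting a multiple of it from `v`
removes another coordinate. -/
theorem span_inter_rationalVectors_of_algHom_comp_mem [Finite ι] {S : Set (L →ₐ[K] L)}
    (hS : ∀ a : L, (∀ σ ∈ S, σ a = a) → a ∈ Set.range (algebraMap K L))
    {V : Submodule L (ι → L)} (hV : ∀ σ ∈ S, ∀ v ∈ V, σ ∘ v ∈ V) :
    Submodule.span L (V ∩ rationalVectors K L ι) = V := by
  refine le_antisymm (Submodule.span_le.2 Set.inter_subset_left) fun v hv => ?_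
  induction hs : Function.support v using WellFoundedLT.induction generalizing v with
  | ind s ih =>
  subst hs
  obtain rfl | hv0 := eq_or_ne v 0
  · exact Submodule.zero_mem _
  obtain ⟨j, hj⟩ := Function.ne_iff.1 hv0
  obtain ⟨u, huV, huj, hvu⟩ : ∃ u ∈ V, u j = 1 ∧ v = v j • u :=
    ⟨(v j)⁻¹ • v, V.smul_mem _ hv, inv_mul_cancel₀ hj, (smul_inv_smul₀ hj v).symm⟩
  have hsupp : Function.support v = Function.support u := by
    rw [hvu, Function.support_const_smul_of_ne_zero _ _ hj]
  rw [hsupp] at ih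
  rw [hvu]
  refine Submodule.smul_mem _ _ ?_
  by_cases hfix : ∀ σ ∈ S, σ ∘ u = u
  · exact Submodule.subset_span ⟨huV, fun i => hS _ fun σ hσ => congrFun (hfix σ hσ) i⟩
  push Not at hfix
  obtain ⟨σ, hσ, hσu⟩ := hfix
  have hdu : Function.support (σ ∘ u - u) ⊂ Function.support u :=
    support_algHom_comp_sub_ssubset σ huj
  have hdV : σ ∘ u - u ∈ V := V.sub_mem (hV σ hσ u huV) huV
  obtain ⟨k, hk⟩ := Function.ne_iff.1 (sub_ne_zero.2 hσu)
  rw [← sub_add_cancel u ((u k / (σ ∘ u - u) k) • (σ ∘ u - u))]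
  refine Submodule.add_mem _ ?_ (Submodule.smul_mem _ _ (ih _ hdu _ hdV rfl))
  exact ih _ (support_sub_smul_ssubset hk hdu.subset) _
    (V.sub_mem huV (V.smul_mem _ hdV)) rfl

lemma rankWeight_le_card_of_mem_span {κ : Type*} [Fintype κ] {a : κ → ι → L}
    (ha : ∀ j, a j ∈ rationalVectors K L ι) {x : ι → L}
    (hx : x ∈ Submodule.span L (Set.range a)) : rankWeight K x ≤ Fintype.card κ := by
  obtain ⟨c, rfl⟩ := (Submodule.mem_span_range_iff_exists_fun L).1 hx
  have hspan : Submodule.span K (Set.range (∑ j, c j • a j)) ≤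
      Submodule.span K (Set.range c) := by
    rw [Submodule.span_le]
    rintro _ ⟨i, rfl⟩
    rw [Finset.sum_apply]
    refine Submodule.sum_mem _ fun j _ => ?_
    obtain ⟨b, hb⟩ := ha j i
    rw [Pi.smul_apply, ← hb, smul_eq_mul, mul_comm, ← Algebra.smul_def]
    exact Submodule.smul_mem _ _ (Submodule.subset_span ⟨j, rfl⟩)
  have : FiniteDimensional K (Submodule.span K (Set.range c)) :=
    FiniteDimensional.span_of_finite K (Set.finite_range c)
  exact (Submodule.finrank_mono hspan).trans (finrank_range_le_card c)

lemma rankWeight_le_finrank_span [Finite ι] {s : Set (ι → L)} (hs : s ⊆ rationalVectors K L ι)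
    {x : ι → L} (hx : x ∈ Submodule.span L s) :
    rankWeight K x ≤ Module.finrank L (Submodule.span L s) := by
  obtain ⟨a, has, hspan, -⟩ := Submodule.exists_fun_fin_finrank_span_eq L s
  rw [← hspan] at hx
  exact (rankWeight_le_card_of_mem_span (fun j => hs (has j)) hx).trans_eq (Fintype.card_fin _)

lemma exists_rationalVectors_mem_span [Finite ι] (x : ι → L) :
    ∃ a : Fin (rankWeight K x) → ι → L,
      (∀ j, a j ∈ rationalVectors K L ι) ∧ x ∈ Submodule.span L (Set.range a) := by
  have : FiniteDimensional K (Submodule.span K (Set.range x)) :=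
    FiniteDimensional.span_of_finite K (Set.finite_range x)
  let b : Module.Basis (Fin (rankWeight K x)) K (Submodule.span K (Set.range x)) :=
    Module.finBasis K _
  let y : ι → Submodule.span K (Set.range x) := fun i => ⟨x i, Submodule.subset_span ⟨i, rfl⟩⟩
  refine ⟨fun j i => algebraMap K L (b.repr (y i) j), fun j i => ⟨_, rfl⟩, ?_⟩
  rw [Submodule.mem_span_range_iff_exists_fun]
  refine ⟨fun j => b j, funext fun i => ?_⟩
  calc (∑ j, (b j : L) • fun i => algebraMap K L (b.repr (y i) j)) i
      = ((∑ j, b.repr (y i) j • b j : Submodule.span K (Set.range x)) : L) := by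
        simp only [Finset.sum_apply, Pi.smul_apply, smul_eq_mul, mul_comm (b _ : L),
          ← Algebra.smul_def, AddSubmonoidClass.coe_finsetSum, Submodule.coe_smul]
    _ = x i := by rw [b.sum_repr]

end RationalVectors

section GaloisClosed

variable [Fintype Fq]

lemma mem_range_algebraMap_of_pow_card_eq_self {a : Fqm} (ha : a ^ Fintype.card Fq = a) :
    a ∈ Set.range (algebraMap Fq Fqm) := by
  have hsplits : (Polynomial.X ^ Fintype.card Fq - Polynomial.X : Polynomial Fq).Splits := by
    rw [Polynomial.splits_iff_card_roots, FiniteField.roots_X_pow_card_sub_X,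
      FiniteField.X_pow_card_sub_X_natDegree_eq Fq Fintype.one_lt_card, ← Finset.card_def,
      Finset.card_univ]
  refine hsplits.mem_range_of_isRoot
    (FiniteField.X_pow_card_sub_X_ne_zero Fq Fintype.one_lt_card) ?_
  simp [ha]

variable {n : ℕ}

lemma IsGalClosed.span_inter_rationalVectors {V : Submodule Fqm (Fin n → Fqm)}
    (hV : IsGalClosed (Fintype.card Fq) V) :
    Submodule.span Fqm (V ∩ rationalVectors Fq Fqm (Fin n)) = V := by
  refine span_inter_rationalVectors_of_algHom_comp_mem
    (S := {FiniteField.frobeniusAlgHom Fq Fqm}) ?_ ?_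
  · exact fun a ha => mem_range_algebraMap_of_pow_card_eq_self Fq (ha _ rfl)
  · rintro _ rfl v hv
    exact hV.subset ⟨v, hv, rfl⟩

lemma isGalClosed_span_of_subset_rationalVectors [PerfectField Fqm] {s : Set (Fin n → Fqm)}
    (hs : s ⊆ rationalVectors Fq Fqm (Fin n)) :
    IsGalClosed (Fintype.card Fq) (Submodule.span Fqm s) := by
  obtain ⟨p, _⟩ := ExpChar.exists Fqm
  let φ : Fqm ≃ₐ[Fq] Fqm := FiniteField.frobeniusAlgEquiv Fq Fqm p
  refine Set.Subset.antisymm ?_ fun v hv => ⟨φ.symm ∘ v, ?_, ?_⟩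
  · rintro _ ⟨v, hv, rfl⟩
    exact algHom_comp_mem_span_of_subset_rationalVectors φ.toAlgHom hs hv
  · exact algHom_comp_mem_span_of_subset_rationalVectors φ.symm.toAlgHom hs hv
  · exact funext fun i => φ.apply_symm_apply (v i)

theorem isLeast_finrank_isGalClosed_mem [PerfectField Fqm] (x : Fin n → Fqm) :
    IsLeast {d : ℕ | ∃ V : Submodule Fqm (Fin n → Fqm),
      IsGalClosed (Fintype.card Fq) V ∧ d = Module.finrank Fqm V ∧ x ∈ V} (rankWeight Fq x) := by
  have hle (V : Submodule Fqm (Fin n → Fqm)) (hV : IsGalClosed (Fintype.card Fq) V)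
      (hx : x ∈ V) : rankWeight Fq x ≤ Module.finrank Fqm V := by
    rw [← hV.span_inter_rationalVectors] at hx ⊢
    exact rankWeight_le_finrank_span Set.inter_subset_right hx
  constructor
  · obtain ⟨a, ha, hx⟩ := exists_rationalVectors_mem_span (K := Fq) x
    have hclosed : IsGalClosed (Fintype.card Fq) (Submodule.span Fqm (Set.range a)) :=
      isGalClosed_span_of_subset_rationalVectors Fq (Set.range_subset_iff.2 ha)
    refine ⟨_, hclosed, (hle _ hclosed hx).antisymm ?_, hx⟩
    exact (finrank_range_le_card a).trans_eq (Fintype.card_fin _)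
  · rintro _ ⟨V, hV, rfl, hx⟩
    exact hle V hV hx

end GaloisClosed

lemma isLeast_minRankDist {ι : Type*} {C : Submodule Fqm (ι → Fqm)} (hC : C ≠ ⊥) :
    IsLeast {d : ℕ | ∃ x, x ∈ C ∧ x ≠ 0 ∧ d = rankWeight Fq x} (minRankDist Fq C) := by
  obtain ⟨x, hx, hx0⟩ := Submodule.exists_mem_ne_zero_of_ne_bot hC
  exact ⟨Nat.sInf_mem ⟨_, x, hx, hx0, rfl⟩, fun _ => Nat.sInf_le⟩

lemma one_le_finrank_inf_sub_finrank_bot_inf_iff {K M : Type*} [Field K] [AddCommGroup M]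
    [Module K M] {C V : Submodule K M} [FiniteDimensional K C] :
    1 ≤ Module.finrank K ↥(C ⊓ V) - Module.finrank K ↥((⊥ : Submodule K M) ⊓ V) ↔
      ∃ x ∈ C, x ≠ 0 ∧ x ∈ V := by
  rw [bot_inf_eq, finrank_bot, Nat.sub_zero, Submodule.one_le_finrank_iff, Submodule.ne_bot_iff]
  simp only [Submodule.mem_inf]
  tauto

theorem stmt6_general [Fintype Fq] [PerfectField Fqm] {n : ℕ}
    (C : Submodule Fqm (Fin n → Fqm)) (hC : C ≠ ⊥) :
    minRankDist Fq C = RGRW (Fintype.card Fq) C ⊥ 1 := by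
  obtain ⟨⟨x, hxC, hx0, hx⟩, hmin⟩ := isLeast_minRankDist Fq hC
  refine (IsLeast.csInf_eq ⟨?_, ?_⟩).symm
  · obtain ⟨V, hV, hdim, hxV⟩ := (isLeast_finrank_isGalClosed_mem Fq x).1
    exact ⟨V, hV, hx.trans hdim, one_le_finrank_inf_sub_finrank_bot_inf_iff.2 ⟨x, hxC, hx0, hxV⟩⟩
  · rintro _ ⟨V, hV, rfl, hCV⟩
    obtain ⟨y, hyC, hy0, hyV⟩ := one_le_finrank_inf_sub_finrank_bot_inf_iff.1 hCV
    calc minRankDist Fq C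
        ≤ rankWeight Fq y := hmin ⟨y, hyC, hy0, rfl⟩
      _ ≤ Module.finrank Fqm V := (isLeast_finrank_isGalClosed_mem Fq y).2 ⟨V, hV, rfl, hyV⟩

/-- For every nonzero linear code `C ⊆ F_{q^m}^n`, the minimum rank
distance equals the first RGRW with respect to the zero subcode:
`d_R(C) = M_{R,1}(C, {0})`. -/
theorem stmt6 (m n : ℕ) [Fintype Fq] [Fintype Fqm]
    (hq : Fintype.card Fq = q) (hm : Module.finrank Fq Fqm = m)
    (C : Submodule Fqm (Fin n → Fqm)) (hC : C ≠ ⊥) :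
    minRankDist Fq C = RGRW q C ⊥ 1 := by
  subst hq
  exact stmt6_general Fq C hC

end
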